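/- Let ζ = (Δt/ε + Δt²/(2ε²))(1 − a) and γ = ζ² + 2ζ with a ∈ (0,1), Δt > 0, ε > 0. Then γ > 0, γ is strictly decreasing in ε, and γ → +∞ as ε → 0⁺; consequently the CAT2-Tay stability bound μ ≤ (1/√2)·√(2 − w + √((2 − w)² + 2γ)) tends to +∞ as ε → 0⁺ for any fixed real w, meaning the scheme has no CFL restriction from this condition in the stiff limit. -/

import Mathlib

open Filter Topology Set

/-- With ζ_ε = (Δt/ε + Δt²/(2ε²))(1-a) and γ_ε = ζ_ε² + 2ζ_ε: γ_ε > 0, γ is strictly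
decreasing in ε, γ_ε → +∞ as ε → 0⁺, and the CAT2-Tay stability bound
(1/√2)·√(2 - w + √((2-w)² + 2γ_ε)) tends to +∞ as ε → 0⁺ for any fixed w. -/
theorem cat2tay_no_cfl_in_stiff_limit (a Δt w : ℝ) (ha : 0 < a) (ha1 : a < 1)
    (hΔt : 0 < Δt) :
    (∀ ε : ℝ, 0 < ε →
        0 < ((Δt / ε + Δt ^ 2 / (2 * ε ^ 2)) * (1 - a)) ^ 2
              + 2 * ((Δt / ε + Δt ^ 2 / (2 * ε ^ 2)) * (1 - a))) ∧
    StrictAntiOn (fun ε : ℝ =>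
        ((Δt / ε + Δt ^ 2 / (2 * ε ^ 2)) * (1 - a)) ^ 2
          + 2 * ((Δt / ε + Δt ^ 2 / (2 * ε ^ 2)) * (1 - a))) (Ioi 0) ∧
    Tendsto (fun ε : ℝ =>
        ((Δt / ε + Δt ^ 2 / (2 * ε ^ 2)) * (1 - a)) ^ 2
          + 2 * ((Δt / ε + Δt ^ 2 / (2 * ε ^ 2)) * (1 - a))) (𝓝[>] 0) atTop ∧
    Tendsto (fun ε : ℝ =>
        (1 / Real.sqrt 2) * Real.sqrt (2 - w + Real.sqrt ((2 - w) ^ 2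
          + 2 * (((Δt / ε + Δt ^ 2 / (2 * ε ^ 2)) * (1 - a)) ^ 2
            + 2 * ((Δt / ε + Δt ^ 2 / (2 * ε ^ 2)) * (1 - a))))))
      (𝓝[>] 0) atTop := by
  have h1 : 0 < 1 - a := by linarith
  have hz : ∀ ε : ℝ, 0 < ε → 0 < (Δt / ε + Δt ^ 2 / (2 * ε ^ 2)) * (1 - a) := by
    intro ε hε
    positivity
  have hlim : Tendsto (fun ε : ℝ =>
        ((Δt / ε + Δt ^ 2 / (2 * ε ^ 2)) * (1 - a)) ^ 2
          + 2 * ((Δt / ε + Δt ^ 2 / (2 * ε ^ 2)) * (1 - a))) (𝓝[>] 0) atTop := by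
    have hb : Tendsto (fun ε : ℝ => (2 * (Δt * (1 - a))) * ε⁻¹) (𝓝[>] 0) atTop :=
      tendsto_inv_nhdsGT_zero.const_mul_atTop (by positivity)
    refine tendsto_atTop_mono' _ ?_ hb
    filter_upwards [self_mem_nhdsWithin] with ε hε
    have hε' : 0 < ε := hε
    have e : (2 * (Δt * (1 - a))) * ε⁻¹ = 2 * (Δt / ε * (1 - a)) := by
      rw [div_eq_mul_inv]; ring
    have h2 : 0 ≤ Δt ^ 2 / (2 * ε ^ 2) * (1 - a) := by positivity
    rw [e]
    nlinarith [sq_nonneg ((Δt / ε + Δt ^ 2 / (2 * ε ^ 2)) * (1 - a))]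
  refine ⟨?_, ?_, hlim, ?_⟩
  · intro ε hε
    have := hz ε hε
    positivity
  · intro x hx y hy hxy
    have hx' : 0 < x := hx
    have hy' : 0 < y := hy
    have hlt : (Δt / y + Δt ^ 2 / (2 * y ^ 2)) * (1 - a)
        < (Δt / x + Δt ^ 2 / (2 * x ^ 2)) * (1 - a) := by
      apply mul_lt_mul_of_pos_right _ h1
      apply add_lt_add
      · gcongr
      · gcongr
    have := hz y hy'
    show _ < _
    beta_reduce
    gcongr
  · have h2 := tendsto_atTop_add_const_left _ ((2 - w) ^ 2)
      (hlim.const_mul_atTop (zero_lt_two : (0:ℝ) < 2))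
    have h3 := tendsto_atTop_add_const_left _ (2 - w) (Real.tendsto_sqrt_atTop.comp h2)
    exact (Real.tendsto_sqrt_atTop.comp h3).const_mul_atTop (by positivity)
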